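/- arXiv:2306.06913 — 3 statements merged into one kernel-verified Lean document; each statement's English description precedes it below -/
import Mathlib

section
/- (Popov–Belevitch–Hautus test.) Let A be a complex N×N matrix and B a complex N×m matrix. The controllability matrix [B, AB, A²B, …, A^{N−1}B] has rank N if and only if for every eigenvalue λ of A the N×(N+m) matrix [A − λI, B] has rank N (equivalently, there is no nonzero left eigenvector v of A with v*B = 0). -/
/-- The Kalman controllability matrix `[B, AB, A²B, …, A^{N−1}B]` of the pair `(A, B)`,
with columns indexed by `Fin N × Fin m` (the pair `(k, j)` indexing column `j` of `A^k B`). -/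
noncomputable def controllabilityMatrix (N m : ℕ) (A : Matrix (Fin N) (Fin N) ℂ)
    (B : Matrix (Fin N) (Fin m) ℂ) : Matrix (Fin N) (Fin N × Fin m) ℂ :=
  Matrix.of fun (i : Fin N) (p : Fin N × Fin m) => (A ^ (p.1 : ℕ) * B) i p.2

/-!
The row vectors `v` with `v Aᵏ B = 0` for all `k` form a subspace invariant under `v ↦ v A`.
Reducing `Xᵏ` modulo the minimal polynomial of `A` shows that the exponents `k` below its degree
already cut out this subspace, so it is the left kernel of the controllability matrix. If it is
nonzero, a left eigenvector of `A` lies inside it: apply the linear factors of the minimal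
polynomial one after the other to a nonzero `v`, and stop just before the result vanishes. Taking
`k = 0` shows that this eigenvector annihilates `B`. Conversely, a left eigenvector `v` with
`v B = 0` satisfies `v Aᵏ B = μᵏ v B = 0`.
-/

open Polynomial Module
open scoped Matrix

theorem exists_hasEigenvector_mem_of_splits {R M : Type*} [CommRing R] [IsDomain R]
    [AddCommGroup M] [Module R M] {f : End R M} {p : Submodule R M} (hp : p ∈ f.invtSubmodule)
    {q : R[X]} (hq : q.Splits) (hq_monic : q.Monic) {x : M} (hx : x ∈ p) (hx_ne : x ≠ 0)
    (hqx : aeval f q x = 0) : ∃ μ, ∃ y ∈ p, f.HasEigenvector μ y := by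
  rw [hq.eq_prod_roots_of_monic hq_monic] at hqx
  generalize q.roots = s at hqx
  induction s using Multiset.induction generalizing x with
  | empty => exact absurd (by simpa using hqx) hx_ne
  | cons μ s ih =>
    by_cases hfx : f x = μ • x
    · exact ⟨μ, x, hx, End.mem_eigenspace_iff.2 hfx, hx_ne⟩
    · refine ih (x := f x - μ • x) (p.sub_mem (hp hx) (p.smul_mem μ hx)) (sub_ne_zero.2 hfx) ?_
      rw [Multiset.map_cons, Multiset.prod_cons, mul_comm, map_mul, End.mul_apply] at hqx
      simpa using hqx

section Matrix

theorem rank_eq_card_iff_forall_vecMul_eq_zero {K n ι : Type*} [Field K] [Fintype n] [Fintype ι]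
    (M : Matrix n ι K) : M.rank = Fintype.card n ↔ ∀ v, v ᵥ* M = 0 → v = 0 := by
  rw [M.rank_eq_finrank_span_row, eq_comm, ← Set.finrank,
    ← linearIndependent_iff_card_eq_finrank_span, ← Matrix.vecMul_injective_iff]
  exact injective_iff_map_eq_zero M.vecMulLinear

theorem vecMul_fromCols_eq_zero_iff {R n m₁ m₂ : Type*} [Semiring R] [Fintype n]
    {M₁ : Matrix n m₁ R} {M₂ : Matrix n m₂ R} {v : n → R} :
    v ᵥ* Matrix.fromCols M₁ M₂ = 0 ↔ v ᵥ* M₁ = 0 ∧ v ᵥ* M₂ = 0 := by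
  rw [Matrix.vecMul_fromCols, ← Sum.elim_zero_zero, Sum.elim_eq_iff]

theorem vecMul_sub_smul_one_eq_zero_iff {R n : Type*} [CommRing R] [Fintype n] [DecidableEq n]
    {A : Matrix n n R} {μ : R} {v : n → R} : v ᵥ* (A - μ • 1) = 0 ↔ v ᵥ* A = μ • v := by
  rw [Matrix.vecMul_sub, Matrix.vecMul_smul, Matrix.vecMul_one, sub_eq_zero]

theorem det_sub_smul_one_eq_zero_of_hasEigenvector {R n : Type*} [CommRing R]
    [IsDomain R] [Fintype n] [DecidableEq n] {A : Matrix n n R} {μ : R} {v : n → R}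
    (hv : End.HasEigenvector A.vecMulLinear μ v) : (A - μ • 1).det = 0 :=
  Matrix.exists_vecMul_eq_zero_iff.1
    ⟨v, hv.2, vecMul_sub_smul_one_eq_zero_iff.2 hv.apply_eq_smul⟩

theorem aeval_vecMulLinear {R n : Type*} [CommSemiring R] [Fintype n] [DecidableEq n]
    (A : Matrix n n R) (q : R[X]) : aeval A.vecMulLinear q = (aeval A q).vecMulLinear := by
  have pow_vecMulLinear (k : ℕ) : A.vecMulLinear ^ k = (A ^ k).vecMulLinear := by
    induction k with
    | zero => ext; simp
    | succ k ih =>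
      rw [pow_succ, ih, pow_succ' A]
      exact LinearMap.ext fun v => Matrix.vecMul_vecMul v A (A ^ k)
  induction q using Polynomial.induction_on' with
  | add p q hp hq => ext; simp [hp, hq]
  | monomial k c => ext; simp [aeval_monomial, ← Algebra.smul_def, pow_vecMulLinear]

theorem natDegree_minpoly_le_card {R n : Type*} [CommRing R] [Nontrivial R] [Fintype n]
    [DecidableEq n] (A : Matrix n n R) : (minpoly R A).natDegree ≤ Fintype.card n :=
  A.charpoly_natDegree_eq_dim ▸
    natDegree_le_natDegree (minpoly.min R A A.charpoly_monic A.aeval_self_charpoly)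

end Matrix

section Krylov

variable {R n m : Type*} [Fintype n] [DecidableEq n]

/-- The block Krylov matrix `[B, AB, …, A^{d−1}B]`, of which the controllability matrix is the case
`d = N`; as there, the pair `(k, j)` indexes column `j` of `A^k B`. -/
def krylovMatrix [Semiring R] (A : Matrix n n R) (B : Matrix n m R) (d : ℕ) :
    Matrix n (Fin d × m) R :=
  Matrix.of fun i p => (A ^ (p.1 : ℕ) * B) i p.2

theorem vecMul_krylovMatrix_eq_zero_iff [Semiring R] {A : Matrix n n R} {B : Matrix n m R} {d : ℕ}
    {v : n → R} : v ᵥ* krylovMatrix A B d = 0 ↔ ∀ k < d, v ᵥ* (A ^ k * B) = 0 :=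
  ⟨fun h k hk => funext fun j => congrFun h (⟨k, hk⟩, j),
    fun h => funext fun p => congrFun (h p.1 p.1.2) p.2⟩

/-- The uncontrollable modes of the pair `(A, B)`: the annihilator of the reachable subspace
`∑ₖ range (A^k B)`, realised as a space of row vectors. -/
def uncontrollableSubmodule [CommSemiring R] (A : Matrix n n R) (B : Matrix n m R) :
    Submodule R (n → R) :=
  ⨅ k : ℕ, LinearMap.ker (A ^ k * B).vecMulLinear

section CommSemiring

variable [CommSemiring R] {A : Matrix n n R} {B : Matrix n m R} {v : n → R}

theorem mem_uncontrollableSubmodule_iff :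
    v ∈ uncontrollableSubmodule A B ↔ ∀ k, v ᵥ* (A ^ k * B) = 0 := by
  simp [uncontrollableSubmodule]

theorem uncontrollableSubmodule_mem_invtSubmodule :
    uncontrollableSubmodule A B ∈ End.invtSubmodule A.vecMulLinear := by
  intro v hv
  rw [Submodule.mem_comap, mem_uncontrollableSubmodule_iff]
  intro k
  rw [Matrix.vecMulLinear_apply, Matrix.vecMul_vecMul, ← Matrix.mul_assoc, ← pow_succ']
  exact mem_uncontrollableSubmodule_iff.1 hv (k + 1)

theorem mem_uncontrollableSubmodule_of_vecMul_eq_smul {μ : R} (hA : v ᵥ* A = μ • v)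
    (hB : v ᵥ* B = 0) : v ∈ uncontrollableSubmodule A B := by
  rw [mem_uncontrollableSubmodule_iff]
  intro k
  induction k with
  | zero => simpa using hB
  | succ k ih =>
    rw [pow_succ', Matrix.mul_assoc, ← Matrix.vecMul_vecMul, hA, Matrix.smul_vecMul, ih, smul_zero]

end CommSemiring

theorem mem_uncontrollableSubmodule_of_forall_lt [CommRing R] {A : Matrix n n R} {B : Matrix n m R}
    {v : n → R} {p : R[X]} (hp : p.Monic) (hpA : aeval A p = 0)
    (hv : ∀ k < p.natDegree, v ᵥ* (A ^ k * B) = 0) : v ∈ uncontrollableSubmodule A B := by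
  nontriviality R
  rw [mem_uncontrollableSubmodule_iff]
  intro k
  have pow_eq_sum : A ^ k = ∑ i ∈ (X ^ k %ₘ p).support, (X ^ k %ₘ p).coeff i • A ^ i :=
    calc A ^ k = aeval A (X ^ k %ₘ p) := by
          rw [aeval_modByMonic_eq_self_of_root hpA, map_pow, aeval_X]
      _ = _ := by simp only [aeval_def, eval₂_eq_sum, Polynomial.sum, Algebra.smul_def]
  rw [pow_eq_sum, Matrix.sum_mul, Matrix.vecMul_sum]
  refine Finset.sum_eq_zero fun i hi => ?_
  have hi_lt : i < p.natDegree := coe_lt_degree.1 <|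
    (le_degree_of_mem_supp i hi).trans_lt (degree_modByMonic_lt _ hp)
  rw [Matrix.smul_mul, Matrix.vecMul_smul, hv i hi_lt, smul_zero]

end Krylov

section Field

variable {K n m : Type*} [Field K] [Fintype n] [DecidableEq n] {A : Matrix n n K}
  {B : Matrix n m K}

theorem rank_krylovMatrix_eq_card_iff [Fintype m] {d : ℕ} (hd : (minpoly K A).natDegree ≤ d) :
    (krylovMatrix A B d).rank = Fintype.card n ↔ uncontrollableSubmodule A B = ⊥ := by
  have mem_iff (v : n → K) :
      v ∈ uncontrollableSubmodule A B ↔ v ᵥ* krylovMatrix A B d = 0 := by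
    rw [vecMul_krylovMatrix_eq_zero_iff]
    exact ⟨fun hv k _ => mem_uncontrollableSubmodule_iff.1 hv k,
      fun hv => mem_uncontrollableSubmodule_of_forall_lt (minpoly.monic A.isIntegral)
        (minpoly.aeval K A) fun k hk => hv k (hk.trans_le hd)⟩
  simp only [rank_eq_card_iff_forall_vecMul_eq_zero, Submodule.eq_bot_iff, mem_iff]

theorem uncontrollableSubmodule_eq_bot_iff (hA : (minpoly K A).Splits) :
    uncontrollableSubmodule A B = ⊥ ↔
      ∀ μ v, End.HasEigenvector A.vecMulLinear μ v → v ᵥ* B ≠ 0 := by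
  constructor
  · intro h μ v hv hvB
    have hv_mem := mem_uncontrollableSubmodule_of_vecMul_eq_smul hv.apply_eq_smul hvB
    exact hv.2 ((Submodule.eq_bot_iff _).1 h v hv_mem)
  · intro h
    by_contra h_ne
    obtain ⟨v, hv_mem, hv_ne⟩ := Submodule.exists_mem_ne_zero_of_ne_bot h_ne
    have minpoly_apply : aeval A.vecMulLinear (minpoly K A) v = 0 := by
      rw [aeval_vecMulLinear, minpoly.aeval, Matrix.vecMulLinear_apply, Matrix.vecMul_zero]
    obtain ⟨μ, w, hw_mem, hw⟩ := exists_hasEigenvector_mem_of_splits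
      uncontrollableSubmodule_mem_invtSubmodule hA (minpoly.monic A.isIntegral) hv_mem hv_ne
      minpoly_apply
    exact h μ w hw (by simpa using mem_uncontrollableSubmodule_iff.1 hw_mem 0)

theorem rank_fromCols_sub_smul_one_eq_card_iff [Fintype m] {μ : K} :
    (Matrix.fromCols (A - μ • 1) B).rank = Fintype.card n ↔
      ∀ v, End.HasEigenvector A.vecMulLinear μ v → v ᵥ* B ≠ 0 := by
  simp only [rank_eq_card_iff_forall_vecMul_eq_zero, vecMul_fromCols_eq_zero_iff,
    vecMul_sub_smul_one_eq_zero_iff, End.hasEigenvector_iff, End.mem_eigenspace_iff,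
    Matrix.vecMulLinear_apply]
  grind

theorem pbh_test_general [Fintype m] {d : ℕ} (hA : (minpoly K A).Splits)
    (hd : (minpoly K A).natDegree ≤ d) :
    (krylovMatrix A B d).rank = Fintype.card n ↔
      ∀ μ : K, (A - μ • 1).det = 0 →
        (Matrix.fromCols (A - μ • 1) B).rank = Fintype.card n := by
  rw [rank_krylovMatrix_eq_card_iff hd, uncontrollableSubmodule_eq_bot_iff hA]
  simp only [rank_fromCols_sub_smul_one_eq_card_iff]
  exact ⟨fun h μ _ => h μ,
    fun h μ v hv => h μ (det_sub_smul_one_eq_zero_of_hasEigenvector hv) v hv⟩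

end Field

theorem controllabilityMatrix_eq_krylovMatrix {N m : ℕ} (A : Matrix (Fin N) (Fin N) ℂ)
    (B : Matrix (Fin N) (Fin m) ℂ) : controllabilityMatrix N m A B = krylovMatrix A B N :=
  rfl

/-- **Popov–Belevitch–Hautus test.** The controllability matrix
`[B, AB, A²B, …, A^{N−1}B]` has rank `N` if and only if for every eigenvalue `λ` of `A`
(i.e. every `λ` with `det (A − λI) = 0`) the horizontally concatenated `N × (N+m)` matrix
`[A − λI, B]` has rank `N`. -/
theorem pbh_test (N m : ℕ) (A : Matrix (Fin N) (Fin N) ℂ) (B : Matrix (Fin N) (Fin m) ℂ) :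
    (controllabilityMatrix N m A B).rank = N ↔
      ∀ lam : ℂ, (A - lam • 1).det = 0 →
        (Matrix.fromCols (A - lam • 1) B).rank = N := by
  have hd : (minpoly ℂ A).natDegree ≤ N := by simpa using natDegree_minpoly_le_card A
  simpa only [controllabilityMatrix_eq_krylovMatrix, Fintype.card_fin] using
    pbh_test_general (B := B) (IsAlgClosed.splits (minpoly ℂ A)) hd
end

section
/- (Exact controllability.) Let A be a complex N×N matrix (N ≥ 1). The minimum, over all m ≥ 1 and all complex N×m matrices B for which the controllability matrix [B, AB, A²B, …, A^{N−1}B] has rank N, of the rank of B equals the maximum geometric multiplicity of the eigenvalues of A, i.e. equals max over eigenvalues λ of A of dim ker(A − λI). In particular this minimum is at least 1. -/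
/-- The set of possible ranks of input matrices `B` (over all `m ≥ 1`) making the pair
`(A, B)` controllable in the Kalman sense. Its infimum is the minimum number of driver
nodes `N_D`. -/
def driverRanks (N : ℕ) (A : Matrix (Fin N) (Fin N) ℂ) : Set ℕ :=
  {r : ℕ | ∃ m : ℕ, 1 ≤ m ∧ ∃ B : Matrix (Fin N) (Fin m) ℂ,
    (controllabilityMatrix N m A B).rank = N ∧ B.rank = r}

/-!
By Hautus' test, `(A, B)` is controllable iff `range (A - μ) + range B` is the whole space for every
`μ`. Counting dimensions, this forces `rank B ≥ dim ker (A - μ)`. Conversely, the condition has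
content only at the finitely many eigenvalues `μ`, and there `range (A - μ)` has codimension at most
the maximum geometric multiplicity `d`. Since a vector space over an infinite field is not a finite
union of proper subspaces, vectors can be chosen one after another so that each of them enlarges all
those `range (A - μ)` that are not yet everything; after `d` steps every sum is the whole space.
-/

section

open Module Polynomial

section Reachable

variable {R M : Type*} [Semiring R] [AddCommMonoid M] [Module R M]

/-- The reachable subspace `S + f S + f² S + ⋯` of the system `x' = f x + u` whose inputs `u` are
constrained to lie in `S`. For a matrix pair `(A, B)` it is taken with `S` the column space of `B`,
so that only the inputs themselves, not their parametrization by `B`, enter. -/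
def reachableSubspace (f : End R M) (S : Submodule R M) : Submodule R M :=
  ⨆ k : ℕ, S.map (f ^ k)

lemma le_reachableSubspace (f : End R M) (S : Submodule R M) : S ≤ reachableSubspace f S :=
  S.map_id.symm.trans_le (le_iSup (fun k : ℕ => S.map (f ^ k)) 0)

lemma reachableSubspace_le_comap (f : End R M) (S : Submodule R M) :
    reachableSubspace f S ≤ (reachableSubspace f S).comap f := by
  refine iSup_le fun k => Submodule.map_le_iff_le_comap.1 ?_
  rw [← Submodule.map_comp, ← End.mul_eq_comp, ← pow_succ']
  exact le_iSup (fun k : ℕ => S.map (f ^ k)) (k + 1)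

lemma reachableSubspace_le {f : End R M} {S T : Submodule R M} (hST : S ≤ T)
    (hT : T ≤ T.comap f) : reachableSubspace f S ≤ T := by
  refine iSup_le fun k => Submodule.map_le_iff_le_comap.2 fun x hx => ?_
  exact End.pow_apply_mem_of_forall_mem k hT x (hST hx)

end Reachable

lemma reachableSubspace_eq_iSup_fin {R M : Type*} [CommRing R] [AddCommGroup M] [Module R M]
    [Nontrivial R] [Module.Free R M] [Module.Finite R M] (f : End R M) (S : Submodule R M) :
    reachableSubspace f S = ⨆ k : Fin (finrank R M), S.map (f ^ (k : ℕ)) := by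
  refine le_antisymm (iSup_le fun k => ?_) (iSup_le fun k => le_iSup (fun k : ℕ => S.map (f ^ k)) k)
  have hdeg : (X ^ k %ₘ f.charpoly).degree < finrank R M := by
    rw [← f.charpoly_natDegree, ← degree_eq_natDegree f.charpoly_monic.ne_zero]
    exact degree_modByMonic_lt _ f.charpoly_monic
  rintro _ ⟨x, hx, rfl⟩
  rw [f.pow_eq_aeval_mod_charpoly, aeval_def, eval₂_eq_sum, ← sum_fin _ (by simp) hdeg,
    LinearMap.sum_apply]
  refine sum_mem fun i _ => ?_
  rw [← Algebra.smul_def, LinearMap.smul_apply]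
  exact Submodule.smul_mem _ _ (Submodule.mem_iSup_of_mem i (Submodule.mem_map_of_mem hx))

section Hautus

lemma range_sup_eq_top_of_reachableSubspace_eq_top {R M : Type*} [CommRing R] [AddCommGroup M]
    [Module R M] {f : End R M} {S : Submodule R M} (h : reachableSubspace f S = ⊤) (μ : R) :
    LinearMap.range (f - μ • 1) ⊔ S = ⊤ := by
  refine top_le_iff.1 (h ▸ reachableSubspace_le le_sup_right fun x hx => ?_)
  have hfx : f x = (f - μ • 1) x + μ • x := by simp
  rw [Submodule.mem_comap, hfx]
  exact add_mem (Submodule.mem_sup_left (LinearMap.mem_range_self _ x)) (Submodule.smul_mem _ μ hx)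

variable {K V : Type*} [Field K] [AddCommGroup V] [Module K V] [FiniteDimensional K V]

-- Otherwise the map induced by `f` on `V ⧸ T` has an eigenvalue `μ`, at which it is not surjective.
lemma eq_top_of_forall_range_sup_eq_top [IsAlgClosed K] {f : End K V} {T : Submodule K V}
    (hT : T ≤ T.comap f)
    (h : ∀ μ : K, LinearMap.range (f - μ • 1) ⊔ T = ⊤) : T = ⊤ := by
  by_contra hne
  have : Nontrivial (V ⧸ T) := Submodule.Quotient.nontrivial_iff.2 hne
  obtain ⟨μ, hμ⟩ := End.exists_eigenvalue (T.mapQ T f hT)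
  have hcomp : (T.mapQ T f hT - μ • 1) ∘ₗ T.mkQ = T.mkQ ∘ₗ (f - μ • 1) := by ext; simp
  have hrange : LinearMap.range (T.mapQ T f hT - μ • 1) = ⊤ := by
    rw [← LinearMap.range_comp_of_range_eq_top _ T.range_mkQ, hcomp, LinearMap.range_comp,
      Submodule.map_mkQ_eq_top, sup_comm, h μ]
  rw [End.hasEigenvalue_iff, End.eigenspace_def] at hμ
  exact hμ (LinearMap.ker_eq_bot_iff_range_eq_top.2 hrange)

lemma reachableSubspace_eq_top_iff_forall_range_sup_eq_top [IsAlgClosed K] {f : End K V}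
    {S : Submodule K V} :
    reachableSubspace f S = ⊤ ↔ ∀ μ : K, LinearMap.range (f - μ • 1) ⊔ S = ⊤ := by
  refine ⟨range_sup_eq_top_of_reachableSubspace_eq_top, fun h => ?_⟩
  refine eq_top_of_forall_range_sup_eq_top (reachableSubspace_le_comap f S) fun μ => ?_
  exact top_le_iff.1 (h μ ▸ sup_le_sup_left (le_reachableSubspace f S) _)

end Hautus

section DriverDimension

variable {K V : Type*} [Field K] [AddCommGroup V] [Module K V] [FiniteDimensional K V]

lemma exists_finrank_le_forall_sup_eq_top [Infinite K] {ι : Type*} [Finite ι] (d : ℕ)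
    (p : ι → Submodule K V) (h : ∀ i, finrank K V ≤ finrank K (p i) + d) :
    ∃ S : Submodule K V, finrank K S ≤ d ∧ ∀ i, p i ⊔ S = ⊤ := by
  induction d generalizing p with
  | zero =>
    refine ⟨⊥, by simp, fun i => ?_⟩
    rw [sup_bot_eq]
    exact Submodule.eq_top_of_finrank_eq ((Submodule.finrank_le _).antisymm (h i))
  | succ d ih =>
    obtain ⟨v, hv⟩ := Submodule.exists_forall_notMem_of_forall_ne_top
      (fun i : {i // p i ≠ ⊤} => p i) fun i => i.2
    have hgrow (i : ι) : finrank K V ≤ finrank K (p i ⊔ K ∙ v : Submodule K V) + d := by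
      by_cases hi : p i = ⊤
      · rw [hi, top_sup_eq, finrank_top]
        exact Nat.le_add_right _ _
      · have hlt : finrank K (p i) < finrank K (p i ⊔ K ∙ v : Submodule K V) :=
          Submodule.finrank_lt_finrank_of_lt (Submodule.lt_sup_iff_notMem.2 (hv ⟨i, hi⟩))
        have := h i
        omega
    obtain ⟨S, hS, hpS⟩ := ih _ hgrow
    refine ⟨K ∙ v ⊔ S, ?_, fun i => by rw [← sup_assoc, hpS]⟩
    have := Submodule.finrank_add_le_finrank_add_finrank (K ∙ v) S
    have : finrank K (K ∙ v) ≤ 1 := by simpa using finrank_span_le_card (R := K) {v}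
    omega

/-- The maximum geometric multiplicity of the eigenvalues of `f`. By the conventions for suprema in
`ℕ` it is `0` if there are no eigenvalues or if the multiplicities are unbounded. -/
noncomputable def maxGeometricMultiplicity (f : End K V) : ℕ :=
  ⨆ μ : f.Eigenvalues, finrank K (f.eigenspace μ)

lemma finrank_eigenspace_le_maxGeometricMultiplicity (f : End K V) (μ : f.Eigenvalues) :
    finrank K (f.eigenspace μ) ≤ maxGeometricMultiplicity f :=
  le_ciSup (f := fun μ : f.Eigenvalues => finrank K (f.eigenspace μ))
    (Set.finite_range _).bddAbove μ

lemma one_le_maxGeometricMultiplicity [IsAlgClosed K] [Nontrivial V] (f : End K V) :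
    1 ≤ maxGeometricMultiplicity f := by
  obtain ⟨μ, hμ⟩ := End.exists_eigenvalue f
  exact (Submodule.one_le_finrank_iff.2 (End.hasEigenvalue_iff.1 hμ)).trans
    (finrank_eigenspace_le_maxGeometricMultiplicity f ⟨μ, hμ⟩)

lemma maxGeometricMultiplicity_le_finrank {f : End K V} {S : Submodule K V}
    (h : reachableSubspace f S = ⊤) : maxGeometricMultiplicity f ≤ finrank K S := by
  refine ciSup_le' fun μ => ?_
  have hdim := Submodule.finrank_add_le_finrank_add_finrank (LinearMap.range (f - (μ : K) • 1)) S
  rw [range_sup_eq_top_of_reachableSubspace_eq_top h, finrank_top,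
    ← LinearMap.finrank_range_add_finrank_ker (f - (μ : K) • 1), ← End.eigenspace_def] at hdim
  exact Nat.le_of_add_le_add_left hdim

lemma exists_reachableSubspace_eq_top_finrank_le [IsAlgClosed K] (f : End K V) :
    ∃ S : Submodule K V, reachableSubspace f S = ⊤ ∧ finrank K S ≤ maxGeometricMultiplicity f := by
  obtain ⟨S, hS, hsup⟩ := exists_finrank_le_forall_sup_eq_top (maxGeometricMultiplicity f)
    (fun μ : f.Eigenvalues => LinearMap.range (f - (μ : K) • 1)) fun μ => by
      rw [← LinearMap.finrank_range_add_finrank_ker (f - (μ : K) • 1), ← End.eigenspace_def]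
      exact Nat.add_le_add_left (finrank_eigenspace_le_maxGeometricMultiplicity f μ) _
  refine ⟨S, reachableSubspace_eq_top_iff_forall_range_sup_eq_top.2 fun μ => ?_, hS⟩
  by_cases hμ : f.HasEigenvalue μ
  · exact hsup ⟨μ, hμ⟩
  · rw [End.hasEigenvalue_iff, not_not, End.eigenspace_def] at hμ
    rw [LinearMap.ker_eq_bot_iff_range_eq_top.1 hμ, top_sup_eq]

theorem exact_controllability_general [IsAlgClosed K] (f : End K V) :
    IsLeast {r | ∃ S : Submodule K V, reachableSubspace f S = ⊤ ∧ finrank K S = r}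
      (maxGeometricMultiplicity f) := by
  obtain ⟨S, hS, hle⟩ := exists_reachableSubspace_eq_top_finrank_le f
  refine ⟨⟨S, hS, hle.antisymm (maxGeometricMultiplicity_le_finrank hS)⟩, ?_⟩
  rintro _ ⟨T, hT, rfl⟩
  exact maxGeometricMultiplicity_le_finrank hT

end DriverDimension

section Matrices

lemma exists_matrix_range_mulVecLin_eq {K n : Type*} [Field K] [Fintype n]
    (S : Submodule K (n → K)) : ∃ B : Matrix n n K, LinearMap.range B.mulVecLin = S := by
  classical
  obtain ⟨g, hg⟩ := S.exists_isCompl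
  refine ⟨LinearMap.toMatrix' (S.projection g hg), ?_⟩
  rw [← Matrix.toLin'_apply', Matrix.toLin'_toMatrix', Submodule.range_projection]

lemma sSup_finrank_ker_eq_maxGeometricMultiplicity {K n : Type*} [Field K] [Fintype n]
    [DecidableEq n] (A : Matrix n n K) :
    sSup {d : ℕ | ∃ μ : K, (A - μ • 1).det = 0 ∧
      d = finrank K (LinearMap.ker (Matrix.mulVecLin (A - μ • 1)))} =
      maxGeometricMultiplicity A.mulVecLin := by
  have hker (μ : K) : LinearMap.ker (A - μ • 1).mulVecLin = End.eigenspace A.mulVecLin μ := by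
    rw [End.eigenspace_def]
    congr 1
    ext
    simp
  have hdet (μ : K) : (A - μ • 1).det = 0 ↔ End.HasEigenvalue A.mulVecLin μ := by
    rw [End.hasEigenvalue_iff, ← hker, ← LinearMap.det_eq_zero_iff_ker_ne_bot,
      ← Matrix.toLin'_apply', LinearMap.det_toLin']
  refine congrArg sSup (Set.ext fun d => ⟨?_, ?_⟩)
  · rintro ⟨μ, hμ, rfl⟩
    exact ⟨⟨μ, (hdet μ).1 hμ⟩, by rw [hker]; rfl⟩
  · rintro ⟨μ, rfl⟩
    exact ⟨μ, (hdet μ).2 μ.2, by rw [hker]⟩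

lemma range_controllabilityMatrix {N m : ℕ} (A : Matrix (Fin N) (Fin N) ℂ)
    (B : Matrix (Fin N) (Fin m) ℂ) :
    LinearMap.range (controllabilityMatrix N m A B).mulVecLin =
      reachableSubspace A.mulVecLin (LinearMap.range B.mulVecLin) := by
  have hcol (k : Fin N) (j : Fin m) : (controllabilityMatrix N m A B).col (k, j) =
      (A.mulVecLin ^ (k : ℕ)) (B.col j) := by
    rw [← Matrix.toLin'_apply', ← Matrix.toLin'_pow, Matrix.toLin'_apply]
    rfl
  rw [reachableSubspace_eq_iSup_fin, finrank_fin_fun, Matrix.range_mulVecLin,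
    Matrix.range_mulVecLin]
  simp only [Submodule.map_span, ← Submodule.span_iUnion, ← Set.range_comp]
  congr 1
  ext v
  simp [hcol]

lemma rank_controllabilityMatrix_eq_iff {N m : ℕ} {A : Matrix (Fin N) (Fin N) ℂ}
    {B : Matrix (Fin N) (Fin m) ℂ} :
    (controllabilityMatrix N m A B).rank = N ↔
      reachableSubspace A.mulVecLin (LinearMap.range B.mulVecLin) = ⊤ := by
  rw [Matrix.rank, range_controllabilityMatrix, Submodule.eq_top_iff_finrank_eq, finrank_fin_fun]

lemma driverRanks_eq_setOf_finrank {N : ℕ} (hN : 1 ≤ N) (A : Matrix (Fin N) (Fin N) ℂ) :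
    driverRanks N A = {r | ∃ S : Submodule ℂ (Fin N → ℂ),
      reachableSubspace A.mulVecLin S = ⊤ ∧ finrank ℂ S = r} := by
  ext r
  constructor
  · rintro ⟨m, -, B, hB, hr⟩
    exact ⟨_, rank_controllabilityMatrix_eq_iff.1 hB, hr⟩
  · rintro ⟨S, hS, hr⟩
    obtain ⟨B, rfl⟩ := exists_matrix_range_mulVecLin_eq S
    exact ⟨N, hN, B, rank_controllabilityMatrix_eq_iff.2 hS, hr⟩

end Matrices

end

/-- **Exact controllability.** For `N ≥ 1`, the minimum, over all `m ≥ 1` and all `N × m`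
matrices `B` for which the controllability matrix `[B, AB, …, A^{N−1}B]` has rank `N`, of
the rank of `B` equals the maximum geometric multiplicity `max_λ dim ker(A − λI)` over the
eigenvalues `λ` of `A`; in particular it is at least `1`. -/
theorem exact_controllability (N : ℕ) (hN : 1 ≤ N) (A : Matrix (Fin N) (Fin N) ℂ) :
    sInf (driverRanks N A) =
      sSup {d : ℕ | ∃ lam : ℂ, (A - lam • 1).det = 0 ∧
        d = Module.finrank ℂ (LinearMap.ker (Matrix.mulVecLin (A - lam • 1)))} ∧
    1 ≤ sInf (driverRanks N A) := by
  have : Nonempty (Fin N) := ⟨⟨0, hN⟩⟩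
  rw [driverRanks_eq_setOf_finrank hN, sSup_finrank_ker_eq_maxGeometricMultiplicity,
    (exact_controllability_general _).csInf_eq]
  exact ⟨rfl, one_le_maxGeometricMultiplicity _⟩
end

section
/- Let A be a complex N×N matrix (N ≥ 1) such that 0 is an eigenvalue of A of maximal geometric multiplicity, i.e. for every eigenvalue λ of A, dim ker(A − λI) ≤ N − rank(A). Then the minimum number of driver nodes satisfies N_D = max{N − rank(A), 1}: the minimum, over all m ≥ 1 and all complex N×m matrices B for which the controllability matrix [B, AB, A²B, …, A^{N−1}B] has rank N, of the rank of B equals max{N − rank(A), 1}. -/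
/-!
By duality the Kalman matrix has full rank exactly when no eigenvector of `Aᵀ` is killed by `Bᵀ`
(the Popov–Belevitch–Hautus test). Hence `Bᵀ` is injective on every eigenspace of `Aᵀ`, and the
rank of `B` is at least every geometric multiplicity. Conversely, eigenspaces for distinct
eigenvalues are independent, so injections of all of them into one space, of dimension the largest
geometric multiplicity, glue to a single linear map; its matrix is the transpose of an input matrix
attaining the bound.
-/

open Module Module.End
open scoped Matrix

section LinearMaps

variable {K V W : Type*}

theorem exists_linearMap_disjoint_ker_of_iSupIndep [Field K] [AddCommGroup V] [Module K V]
    [AddCommGroup W] [Module K W] [FiniteDimensional K W] {ι : Type*} {p : ι → Submodule K V}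
    [∀ i, FiniteDimensional K (p i)] (hp : iSupIndep p)
    (hdim : ∀ i, finrank K (p i) ≤ finrank K W) :
    ∃ F : V →ₗ[K] W, ∀ i, Disjoint (p i) (LinearMap.ker F) := by
  classical
  choose f hf using fun i => finrank_le_iff_exists_linearMap.mp (hdim i)
  obtain ⟨g, hg⟩ := LinearMap.exists_leftInverse_of_injective _
    (LinearMap.ker_eq_bot.mpr hp.dfinsupp_lsum_injective)
  refine ⟨DFinsupp.lsum ℕ f ∘ₗ g, fun i => Submodule.disjoint_def.mpr fun v hv hFv => ?_⟩
  have hgv : g v = DFinsupp.single i (⟨v, hv⟩ : p i) := by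
    simpa using LinearMap.congr_fun hg (DFinsupp.single i (⟨v, hv⟩ : p i))
  have hfv : f i ⟨v, hv⟩ = 0 := by simpa [hgv] using hFv
  simpa using (map_eq_zero_iff (f i) (hf i)).mp hfv

theorem finrank_le_finrank_range_of_disjoint_ker [Ring K] [StrongRankCondition K]
    [AddCommGroup V] [Module K V] [AddCommGroup W] [Module K W] {p : Submodule K V} {F : V →ₗ[K] W}
    [Module.Finite K (LinearMap.range F)] (h : Disjoint p (LinearMap.ker F)) :
    finrank K p ≤ finrank K (LinearMap.range F) :=
  LinearMap.finrank_le_finrank_of_injective (f := F.rangeRestrict.domRestrict p) <| by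
    rwa [LinearMap.injective_domRestrict_iff, LinearMap.ker_rangeRestrict]

theorem eq_bot_of_mem_invtSubmodule_of_disjoint_eigenspace [Field K] [IsAlgClosed K]
    [AddCommGroup V] [Module K V] [FiniteDimensional K V] {T : End K V} {p : Submodule K V}
    (hp : p ∈ T.invtSubmodule) (h : ∀ μ, Disjoint (T.eigenspace μ) p) : p = ⊥ := by
  by_contra hne
  have : Nontrivial p := Submodule.nontrivial_iff_ne_bot.mpr hne
  obtain ⟨μ, hμ⟩ := exists_eigenvalue (T.restrict hp)
  exact hμ (eigenspace_restrict_eq_bot hp (h μ))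

section Unobservable

variable {R : Type*} [Semiring R] [AddCommMonoid V] [Module R V] [AddCommMonoid W] [Module R W]

/-- The unobservable subspace of the system `x' = T x`, `y = S x`: the initial states for which the
output and all its derivatives vanish at time `0`. It is the dual form of uncontrollability, used
with `T = Aᵀ` and `S = Bᵀ`. -/
def unobservableSubspace (T : End R V) (S : V →ₗ[R] W) : Submodule R V :=
  ⨅ k : ℕ, LinearMap.ker (S ∘ₗ T ^ k)

variable {T : End R V} {S : V →ₗ[R] W}

theorem mem_unobservableSubspace {v : V} :
    v ∈ unobservableSubspace T S ↔ ∀ k : ℕ, S ((T ^ k) v) = 0 := by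
  simp [unobservableSubspace]

theorem unobservableSubspace_mem_invtSubmodule : unobservableSubspace T S ∈ T.invtSubmodule := by
  intro v hv
  rw [Submodule.mem_comap, mem_unobservableSubspace]
  intro k
  rw [← End.mul_apply, ← pow_succ]
  exact mem_unobservableSubspace.mp hv (k + 1)

end Unobservable

theorem mem_unobservableSubspace_iff_forall_lt_finrank {R : Type*} [CommRing R] [Nontrivial R]
    [AddCommGroup V] [Module R V] [Module.Free R V] [Module.Finite R V] [AddCommMonoid W]
    [Module R W] {T : End R V} {S : V →ₗ[R] W} {v : V} :
    v ∈ unobservableSubspace T S ↔ ∀ k < finrank R V, S ((T ^ k) v) = 0 := by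
  rw [mem_unobservableSubspace]
  refine ⟨fun h k _ => h k, fun h k => ?_⟩
  rw [T.pow_eq_aeval_mod_charpoly, Polynomial.aeval_def, Polynomial.eval₂_eq_sum,
    Polynomial.sum_def, LinearMap.sum_apply, map_sum]
  refine Finset.sum_eq_zero fun i hi => ?_
  have hdeg : (i : WithBot ℕ) < T.charpoly.degree :=
    (Polynomial.le_degree_of_mem_supp i hi).trans_lt
      (Polynomial.degree_modByMonic_lt _ T.charpoly_monic)
  have hi_lt : i < finrank R V := by
    rwa [Polynomial.degree_eq_natDegree T.charpoly_monic.ne_zero, T.charpoly_natDegree,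
      Nat.cast_lt] at hdeg
  rw [End.mul_apply, Module.algebraMap_end_apply, map_smul, h i hi_lt, smul_zero]

theorem unobservableSubspace_eq_bot_iff_forall_disjoint_eigenspace_ker [Field K] [IsAlgClosed K]
    [AddCommGroup V] [Module K V] [FiniteDimensional K V] [AddCommMonoid W] [Module K W]
    {T : End K V} {S : V →ₗ[K] W} :
    unobservableSubspace T S = ⊥ ↔ ∀ μ, Disjoint (T.eigenspace μ) (LinearMap.ker S) := by
  constructor
  · refine fun h μ => Submodule.disjoint_def.mpr fun v hTv hSv => ?_
    rw [← Submodule.mem_bot K, ← h, mem_unobservableSubspace]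
    intro k
    have hpow : (T ^ k) v = μ ^ k • v := by
      simpa using
        aeval_apply_of_mem_apply_eq_smul (p := Polynomial.X ^ k) (mem_eigenspace_iff.mp hTv)
    rw [hpow, map_smul, LinearMap.mem_ker.mp hSv, smul_zero]
  · refine fun h => eq_bot_of_mem_invtSubmodule_of_disjoint_eigenspace
      unobservableSubspace_mem_invtSubmodule fun μ => (h μ).mono_right fun v hv => ?_
    exact mem_unobservableSubspace.mp hv 0

end LinearMaps

section Matrices

theorem finrank_ker_mulVecLin {K m n : Type*} [Field K] [Fintype n] (M : Matrix m n K) :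
    finrank K (LinearMap.ker M.mulVecLin) = Fintype.card n - M.rank := by
  have h := M.mulVecLin.finrank_range_add_finrank_ker
  rw [finrank_fintype_fun_eq_card] at h
  rw [Matrix.rank]
  lia

theorem eigenspace_mulVecLin {R n : Type*} [CommRing R] [Fintype n] [DecidableEq n]
    (M : Matrix n n R) (μ : R) :
    eigenspace M.mulVecLin μ = LinearMap.ker (M - μ • 1).mulVecLin := by
  ext v
  simp [sub_eq_zero]

variable {K n : Type*} [Field K] [Fintype n] [DecidableEq n]

/-- The geometric multiplicity of `μ` as an eigenvalue of `M`, with value `0` when `μ` is not an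
eigenvalue, so that it can be compared over all scalars `μ`. -/
noncomputable def geometricMultiplicity (M : Matrix n n K) (μ : K) : ℕ :=
  finrank K (LinearMap.ker (M - μ • 1).mulVecLin)

theorem geometricMultiplicity_eq_card_sub_rank (M : Matrix n n K) (μ : K) :
    geometricMultiplicity M μ = Fintype.card n - (M - μ • 1).rank :=
  finrank_ker_mulVecLin _

theorem finrank_eigenspace_mulVecLin (M : Matrix n n K) (μ : K) :
    finrank K (eigenspace M.mulVecLin μ) = geometricMultiplicity M μ := by
  rw [eigenspace_mulVecLin, geometricMultiplicity]

theorem geometricMultiplicity_transpose (M : Matrix n n K) (μ : K) :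
    geometricMultiplicity Mᵀ μ = geometricMultiplicity M μ := by
  have htr : Mᵀ - μ • 1 = (M - μ • 1)ᵀ := by simp
  rw [geometricMultiplicity_eq_card_sub_rank, htr, Matrix.rank_transpose,
    ← geometricMultiplicity_eq_card_sub_rank]

theorem exists_geometricMultiplicity_pos [IsAlgClosed K] [Nonempty n] (M : Matrix n n K) :
    ∃ μ : K, 0 < geometricMultiplicity M μ := by
  obtain ⟨μ, hμ⟩ := exists_eigenvalue (M.mulVecLin : End K (n → K))
  exact ⟨μ, finrank_eigenspace_mulVecLin M μ ▸ Submodule.one_le_finrank_iff.mpr hμ⟩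

theorem geometricMultiplicity_eq_zero_of_det_ne_zero {M : Matrix n n K} {μ : K}
    (h : (M - μ • 1).det ≠ 0) : geometricMultiplicity M μ = 0 := by
  have hunit : IsUnit (M - μ • 1) := (Matrix.isUnit_iff_isUnit_det _).mpr h.isUnit
  rw [geometricMultiplicity_eq_card_sub_rank, Matrix.rank_of_isUnit _ hunit, Nat.sub_self]

theorem isGreatest_geometricMultiplicity_corank {N : ℕ} {M : Matrix (Fin N) (Fin N) K}
    (hmax : ∀ μ : K, (M - μ • 1).det = 0 → geometricMultiplicity M μ ≤ N - M.rank) :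
    IsGreatest (Set.range (geometricMultiplicity M)) (N - M.rank) := by
  have hzero : geometricMultiplicity M 0 = N - M.rank := by
    rw [geometricMultiplicity_eq_card_sub_rank, zero_smul, sub_zero, Fintype.card_fin]
  refine ⟨⟨0, hzero⟩, ?_⟩
  rintro _ ⟨μ, rfl⟩
  by_cases hdet : (M - μ • 1).det = 0
  · exact hmax μ hdet
  · exact (geometricMultiplicity_eq_zero_of_det_ne_zero hdet).trans_le (Nat.zero_le _)

end Matrices

section Controllability

variable {N m : ℕ} {A : Matrix (Fin N) (Fin N) ℂ} {B : Matrix (Fin N) (Fin m) ℂ}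

theorem ker_mulVecLin_transpose_controllabilityMatrix :
    LinearMap.ker (controllabilityMatrix N m A B)ᵀ.mulVecLin =
      unobservableSubspace Aᵀ.mulVecLin Bᵀ.mulVecLin := by
  ext w
  rw [mem_unobservableSubspace_iff_forall_lt_finrank, finrank_fin_fun, LinearMap.mem_ker]
  have hblock (k : Fin N) (j : Fin m) : ((controllabilityMatrix N m A B)ᵀ *ᵥ w) (k, j) =
      Bᵀ.mulVecLin ((Aᵀ.mulVecLin ^ (k : ℕ)) w) j := by
    have hpow : Aᵀ.mulVecLin ^ (k : ℕ) = (Aᵀ ^ (k : ℕ)).mulVecLin := (Matrix.toLin'_pow _ _).symm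
    have hrow : ((controllabilityMatrix N m A B)ᵀ *ᵥ w) (k, j) = ((A ^ (k : ℕ) * B)ᵀ *ᵥ w) j := rfl
    rw [hrow, hpow, Matrix.transpose_mul, Matrix.transpose_pow, Matrix.mulVecLin_apply,
      Matrix.mulVecLin_apply, Matrix.mulVec_mulVec]
  simp only [funext_iff, Prod.forall, Matrix.mulVecLin_apply, hblock, Fin.forall_iff, Pi.zero_apply]

theorem rank_controllabilityMatrix_eq_iff_forall_disjoint_eigenspace_ker :
    (controllabilityMatrix N m A B).rank = N ↔
      ∀ μ, Disjoint (eigenspace Aᵀ.mulVecLin μ) (LinearMap.ker Bᵀ.mulVecLin) := by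
  rw [← unobservableSubspace_eq_bot_iff_forall_disjoint_eigenspace_ker,
    ← ker_mulVecLin_transpose_controllabilityMatrix, ← Submodule.finrank_eq_zero (R := ℂ),
    finrank_ker_mulVecLin, Matrix.rank_transpose, Fintype.card_fin]
  have hheight := (controllabilityMatrix N m A B).rank_le_card_height
  rw [Fintype.card_fin] at hheight
  lia

theorem geometricMultiplicity_le_of_mem_driverRanks {r : ℕ} (hr : r ∈ driverRanks N A) (μ : ℂ) :
    geometricMultiplicity A μ ≤ r := by
  obtain ⟨m, -, B, hB, rfl⟩ := hr
  rw [← geometricMultiplicity_transpose, ← finrank_eigenspace_mulVecLin, ← Matrix.rank_transpose B]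
  exact finrank_le_finrank_range_of_disjoint_ker
    (rank_controllabilityMatrix_eq_iff_forall_disjoint_eigenspace_ker.mp hB μ)

theorem one_le_of_mem_driverRanks (hN : 1 ≤ N) {r : ℕ} (hr : r ∈ driverRanks N A) :
    1 ≤ r := by
  have : Nonempty (Fin N) := ⟨⟨0, hN⟩⟩
  obtain ⟨μ, hμ⟩ := exists_geometricMultiplicity_pos A
  exact hμ.trans_le (geometricMultiplicity_le_of_mem_driverRanks hr μ)

theorem exists_rank_controllabilityMatrix_eq (hm : ∀ μ, geometricMultiplicity A μ ≤ m) :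
    ∃ B : Matrix (Fin N) (Fin m) ℂ, (controllabilityMatrix N m A B).rank = N := by
  have hdim (μ : ℂ) :
      finrank ℂ (eigenspace Aᵀ.mulVecLin μ) ≤ finrank ℂ (Fin m → ℂ) := by
    rw [finrank_eigenspace_mulVecLin, geometricMultiplicity_transpose, finrank_fin_fun]
    exact hm μ
  obtain ⟨F, hF⟩ :=
    exists_linearMap_disjoint_ker_of_iSupIndep (eigenspaces_iSupIndep Aᵀ.mulVecLin) hdim
  refine ⟨(LinearMap.toMatrix' F)ᵀ,
    rank_controllabilityMatrix_eq_iff_forall_disjoint_eigenspace_ker.mpr ?_⟩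
  have hFmat : (LinearMap.toMatrix' F)ᵀᵀ.mulVecLin = F := Matrix.toLin'_toMatrix' F
  rwa [hFmat]

end Controllability

theorem driver_nodes_eq_corank_general (N : ℕ) (hN : 1 ≤ N) (A : Matrix (Fin N) (Fin N) ℂ) (d : ℕ)
    (hd : IsGreatest (Set.range (geometricMultiplicity A)) d) :
    IsLeast (driverRanks N A) d := by
  have : Nonempty (Fin N) := ⟨⟨0, hN⟩⟩
  obtain ⟨⟨μ, hμ⟩, hle⟩ := hd
  obtain ⟨ν, hν⟩ := exists_geometricMultiplicity_pos A
  have hd_pos : 1 ≤ d := hν.trans_le (hle ⟨ν, rfl⟩)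
  have hlower : d ∈ lowerBounds (driverRanks N A) := fun r hr =>
    hμ ▸ geometricMultiplicity_le_of_mem_driverRanks hr μ
  obtain ⟨B, hB⟩ := exists_rank_controllabilityMatrix_eq fun lam => hle ⟨lam, rfl⟩
  have hrank : B.rank = d := le_antisymm B.rank_le_width (hlower ⟨d, hd_pos, B, hB, rfl⟩)
  exact ⟨⟨d, hd_pos, B, hB, hrank⟩, hlower⟩

/-- If `N ≥ 1` and `0` is an eigenvalue of `A` of maximal geometric multiplicity — i.e.
`dim ker(A − λI) ≤ N − rank A` for every eigenvalue `λ` of `A` — then the minimum number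
of driver nodes satisfies `N_D = max {N − rank A, 1}`: the minimum, over all `m ≥ 1` and
all `N × m` matrices `B` making the Kalman controllability matrix have rank `N`, of the
rank of `B` equals `max (N − rank A) 1`. -/
theorem driver_nodes_eq_corank (N : ℕ) (hN : 1 ≤ N) (A : Matrix (Fin N) (Fin N) ℂ)
    (hmax : ∀ lam : ℂ, (A - lam • 1).det = 0 →
      Module.finrank ℂ (LinearMap.ker (Matrix.mulVecLin (A - lam • 1))) ≤ N - A.rank) :
    sInf (driverRanks N A) = max (N - A.rank) 1 := by
  have hleast :=
    driver_nodes_eq_corank_general N hN A _ (isGreatest_geometricMultiplicity_corank hmax)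
  rw [hleast.csInf_eq, max_eq_left (one_le_of_mem_driverRanks hN hleast.1)]
end
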